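/- Let d ≥ 2, let G be a finite simple graph with vertex set V equipped with a linear order < of left-degree at most d, let S ⊆ V be shattered in G with |S| = t, and set p = ⌈log₂ d⌉ + 1. Then either t ≤ p, or there exist p vertices w_1,…,w_p ∈ V such that S ⊆ N⁻(w_1) ∪ ⋯ ∪ N⁻(w_p). -/

import Mathlib

/-!
Let `m` be the largest element of a finite subset `R` of the shattered set `S`. The sets `S \ Y`
with `m ∉ Y` are cut out of `S` by distinct neighbours of `m`, of which at most `d` lie to the
left of `m`. Hence among any `d + 1` such sets `Y` there is one for which the vertex lies to the
right of `m`, and its left neighbourhood then contains `R \ Y`.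

Taking the sets `Y` to be singletons gives `|S| ≤ d + 1`. If `|S| > p`, at least `2 * d` sets `Y`
are available, and by passing to complements more than half of them contain at most `⌊|R| / 2⌋`
elements of `R`. So one left neighbourhood covers at least half of `R`; iterating, `p` of them
cover `S`, because `|S| ≤ d + 1 < 2 ^ p`.
-/

/-- A set `S` of vertices is *shattered* in `G` if every subset `X ⊆ S` is the
intersection of `S` with the neighbourhood of some vertex. -/
def SimpleGraph.Shattered {V : Type*} (G : SimpleGraph V) (S : Set V) : Prop :=
  ∀ X ⊆ S, ∃ w : V, G.neighborSet w ∩ S = X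

section Counting

open Finset

variable {α : Type*} [DecidableEq α] {P Q Z : Finset α} {𝒜 : Finset (Finset α)}

lemma two_pow_card_lt_two_mul_card_of_mem_or_sdiff_mem
    (h𝒜 : ∀ Y ⊆ Q, Y ∈ 𝒜 ∨ Q \ Y ∈ 𝒜) (hZQ : Z ⊆ Q) (hZ : Z ∈ 𝒜) (hQZ : Q \ Z ∈ 𝒜) :
    2 ^ #Q < 2 * #𝒜 := by
  let ℬ := 𝒜.image (Q \ ·)
  have hℬ {Y : Finset α} (hY : Y ⊆ Q) (hQY : Q \ Y ∈ 𝒜) : Y ∈ ℬ :=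
    mem_image.2 ⟨Q \ Y, hQY, Finset.sdiff_sdiff_eq_self hY⟩
  have hunion : Q.powerset ⊆ 𝒜 ∪ ℬ := fun Y hY ↦
    mem_union.2 <| (h𝒜 Y (mem_powerset.1 hY)).imp_right (hℬ (mem_powerset.1 hY))
  have hinter : 0 < #(𝒜 ∩ ℬ) := card_pos.2 ⟨Z, mem_inter.2 ⟨hZ, hℬ hZQ hQZ⟩⟩
  calc 2 ^ #Q = #Q.powerset := (card_powerset Q).symm
    _ ≤ #(𝒜 ∪ ℬ) := card_le_card hunion
    _ < #(𝒜 ∪ ℬ) + #(𝒜 ∩ ℬ) := Nat.lt_add_of_pos_right hinter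
    _ = #𝒜 + #ℬ := card_union_add_card_inter 𝒜 ℬ
    _ ≤ #𝒜 + #𝒜 := Nat.add_le_add_left card_image_le #𝒜
    _ = 2 * #𝒜 := (two_mul _).symm

lemma two_pow_card_lt_two_mul_card_filter_card_inter_le (hPQ : P ⊆ Q) :
    2 ^ #Q < 2 * #{Y ∈ Q.powerset | #(P ∩ Y) ≤ (#P + 1) / 2} := by
  have hcompl (Y : Finset α) : #(P ∩ Y) + #(P ∩ (Q \ Y)) = #P := by
    rw [← inter_sdiff_assoc, inter_eq_left.2 hPQ, card_inter_add_card_sdiff]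
  obtain ⟨Z, hZP, hZ⟩ := exists_subset_card_eq (Nat.div_le_self #P 2)
  have hPZ : #(P ∩ Z) = #P / 2 := by rw [inter_eq_right.2 hZP, hZ]
  have hPQZ := hcompl Z
  refine two_pow_card_lt_two_mul_card_of_mem_or_sdiff_mem (Z := Z) (fun Y hY ↦ ?_)
    (hZP.trans hPQ) ?_ ?_
  · have hPY := hcompl Y
    simp only [mem_filter, mem_powerset, hY, sdiff_subset, true_and]
    omega
  · exact mem_filter.2 ⟨mem_powerset.2 (hZP.trans hPQ), by omega⟩
  · exact mem_filter.2 ⟨mem_powerset.2 sdiff_subset, by omega⟩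

end Counting

section OrderedGraph

open scoped Finset

variable {V : Type*} [LinearOrder V]

/-- The left neighbourhood `N⁻(v)` of a vertex `v` of an ordered graph. -/
def leftNeighborSet (G : SimpleGraph V) (v : V) : Set V :=
  {u | G.Adj u v ∧ u < v}

/-- `LeftCovered G k R` says that the left neighbourhoods of `k` vertices, not necessarily
distinct, cover the set `R`. -/
def LeftCovered (G : SimpleGraph V) (k : ℕ) (R : Set V) : Prop :=
  ∃ w : Fin k → V, R ⊆ ⋃ i, leftNeighborSet G (w i)

variable {G : SimpleGraph V} {d : ℕ}

lemma LeftCovered.of_sdiff {k : ℕ} {R : Set V} {v : V}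
    (h : LeftCovered G k (R \ leftNeighborSet G v)) : LeftCovered G (k + 1) R := by
  obtain ⟨w, hw⟩ := h
  refine ⟨Fin.cons v w, fun u hu ↦ Set.mem_iUnion.2 ?_⟩
  by_cases huv : u ∈ leftNeighborSet G v
  · exact ⟨0, huv⟩
  · obtain ⟨i, hi⟩ := Set.mem_iUnion.1 (hw ⟨hu, huv⟩)
    exact ⟨i.succ, hi⟩

lemma exists_sdiff_subset_leftNeighborSet {S : Set V} (hS : G.Shattered S) {m : V} (hm : m ∈ S)
    {ι : Type*} {I : Finset ι} {Y : ι → Set V} (hYinj : Set.InjOn Y I)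
    (hY : ∀ i ∈ I, Y i ⊆ S \ {m}) (hcard : (leftNeighborSet G m).encard < #I) :
    ∃ i ∈ I, ∃ w, (S ∩ Set.Iic m) \ Y i ⊆ leftNeighborSet G w := by
  choose f hf using fun i ↦ hS (S \ Y i) Set.sdiff_subset
  have hfinj : Set.InjOn f I := by
    intro i hi j hj hij
    have hsdiff : S \ Y i = S \ Y j := by rw [← hf i, hij, hf j]
    apply hYinj hi hj
    rw [← Set.sdiff_sdiff_cancel_left ((hY i hi).trans Set.sdiff_subset), hsdiff,
      Set.sdiff_sdiff_cancel_left ((hY j hj).trans Set.sdiff_subset)]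
  obtain ⟨i, hi, hleft⟩ : ∃ i ∈ I, f i ∉ leftNeighborSet G m := by
    by_contra! hleft
    have hmaps : Set.MapsTo f I (leftNeighborSet G m) := hleft
    have hle := Set.encard_le_encard_of_injOn hmaps hfinj
    rw [Set.encard_coe_eq_coe_finsetCard] at hle
    exact hcard.not_ge hle
  have hadj {u : V} (hu : u ∈ S \ Y i) : G.Adj u (f i) := by
    rw [← hf i] at hu
    exact G.adj_symm hu.1
  have hm_adj : G.Adj m (f i) := hadj ⟨hm, fun hmY ↦ (hY i hi hmY).2 rfl⟩
  have hlt : m < f i := hm_adj.ne.lt_of_le (not_lt.1 fun hlt ↦ hleft ⟨hm_adj.symm, hlt⟩)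
  exact ⟨i, hi, f i, fun u ⟨⟨huS, hum⟩, huY⟩ ↦ ⟨hadj ⟨huS, huY⟩, hum.trans_lt hlt⟩⟩

lemma encard_le_add_one_of_shattered (hdeg : ∀ v, (leftNeighborSet G v).encard ≤ d) {S : Set V}
    (hS : G.Shattered S) : S.encard ≤ d + 1 := by
  by_contra! hlt
  obtain ⟨T, hTS, hT⟩ := Set.exists_subset_encard_eq (Order.add_one_le_of_lt hlt)
  lift T to Finset V using Set.finite_of_encard_eq_coe (k := d + 2) hT
  have hTcard : #T = d + 2 := by
    rw [Set.encard_coe_eq_coe_finsetCard] at hT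
    exact_mod_cast hT
  have hne : T.Nonempty := Finset.card_pos.1 (by omega)
  set m := T.max' hne
  have hm : m ∈ T := T.max'_mem hne
  have hsub : ∀ y ∈ T.erase m, {y} ⊆ S \ {m} := fun y hy ↦ by
    obtain ⟨hym, hyT⟩ := Finset.mem_erase.1 hy
    exact Set.singleton_subset_iff.2 ⟨hTS hyT, hym⟩
  have hcard : (leftNeighborSet G m).encard < #(T.erase m) := by
    rw [Finset.card_erase_of_mem hm, hTcard]
    exact (hdeg m).trans_lt (Nat.cast_lt.2 (by omega))
  obtain ⟨y, -, w, hw⟩ :=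
    exists_sdiff_subset_leftNeighborSet hS (hTS hm) Set.singleton_injective.injOn hsub hcard
  have hTw : (T.erase y : Set V) ⊆ leftNeighborSet G w := fun u hu ↦ by
    obtain ⟨huy, huT⟩ := Finset.mem_erase.1 hu
    exact hw ⟨⟨hTS huT, T.le_max' u huT⟩, huy⟩
  have hle := (Set.encard_le_encard hTw).trans (hdeg w)
  rw [Set.encard_coe_eq_coe_finsetCard, Nat.cast_le] at hle
  have hpred : #T - 1 ≤ #(T.erase y) := Finset.pred_card_le_card_erase
  omega

section Halving

variable [Nonempty V] {S : Finset V} {R : Set V}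

lemma exists_ncard_sdiff_leftNeighborSet_le_half
    (hdeg : ∀ v, (leftNeighborSet G v).encard ≤ d) (hS : G.Shattered S)
    (hd : 4 * d ≤ 2 ^ #S) (hR : R ⊆ S) :
    ∃ w, (R \ leftNeighborSet G w).ncard ≤ R.ncard / 2 := by
  lift R to Finset V using S.finite_toSet.subset hR
  rcases R.eq_empty_or_nonempty with rfl | hne
  · simp
  set m := R.max' hne
  have hmR : m ∈ R := R.max'_mem hne
  have hRS : R ⊆ S := Finset.coe_subset.1 hR
  let P := R.erase m
  let Q := S.erase m
  let 𝒜 := {Y ∈ Q.powerset | #(P ∩ Y) ≤ (#P + 1) / 2}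
  have hP : #P + 1 = #R := Finset.card_erase_add_one hmR
  have hQ : #Q + 1 = #S := Finset.card_erase_add_one (hRS hmR)
  have hsub : ∀ Y ∈ 𝒜, (Y : Set V) ⊆ S \ {m} := fun Y hY ↦ by
    rw [← Finset.coe_erase, Finset.coe_subset]
    exact Finset.mem_powerset.1 (Finset.mem_filter.1 hY).1
  have hcard : d < #𝒜 := by
    have hhalf : 2 ^ #Q < 2 * #𝒜 :=
      two_pow_card_lt_two_mul_card_filter_card_inter_le (Finset.erase_subset_erase m hRS)
    rw [← hQ, pow_succ] at hd
    omega
  obtain ⟨Y, hY, w, hw⟩ := exists_sdiff_subset_leftNeighborSet hS (hRS hmR)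
    Finset.coe_injective.injOn hsub ((hdeg m).trans_lt (Nat.cast_lt.2 hcard))
  obtain ⟨hYQ, hYcard⟩ := Finset.mem_filter.1 hY
  have hRY : (R : Set V) \ leftNeighborSet G w ⊆ (P ∩ Y : Finset V) := by
    intro u ⟨huR, huw⟩
    have huY : u ∈ Y := by_contra fun huY ↦ huw (hw ⟨⟨hR huR, R.le_max' u huR⟩, huY⟩)
    have hum : u ≠ m := Finset.ne_of_mem_erase (Finset.mem_powerset.1 hYQ huY)
    exact Finset.mem_inter.2 ⟨Finset.mem_erase.2 ⟨hum, huR⟩, huY⟩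
  refine ⟨w, ?_⟩
  calc ((R : Set V) \ leftNeighborSet G w).ncard
      ≤ #(P ∩ Y) := by
        simpa only [Set.ncard_coe_finset] using Set.ncard_le_ncard hRY (Finset.finite_toSet _)
    _ ≤ (#P + 1) / 2 := hYcard
    _ = (R : Set V).ncard / 2 := by rw [hP, Set.ncard_coe_finset]

lemma leftCovered_of_ncard_lt_two_pow
    (hdeg : ∀ v, (leftNeighborSet G v).encard ≤ d) (hS : G.Shattered S)
    (hd : 4 * d ≤ 2 ^ #S) (hR : R ⊆ S) {k : ℕ} (hk : R.ncard < 2 ^ k) :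
    LeftCovered G k R := by
  induction k generalizing R with
  | zero =>
    have hempty : R = ∅ := by
      rwa [pow_zero, Nat.lt_one_iff, Set.ncard_eq_zero (S.finite_toSet.subset hR)] at hk
    exact ⟨Fin.elim0, by simp [hempty]⟩
  | succ k ih =>
    obtain ⟨w, hw⟩ := exists_ncard_sdiff_leftNeighborSet_le_half hdeg hS hd hR
    have hlt : (R \ leftNeighborSet G w).ncard < 2 ^ k := by
      rw [pow_succ] at hk
      omega
    exact (ih (Set.sdiff_subset.trans hR) hlt).of_sdiff

end Halving

theorem shattered_small_or_leftCovered_general (hd : 2 ≤ d)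
    (hdeg : ∀ v, (leftNeighborSet G v).encard ≤ d) {S : Set V} (hS : G.Shattered S) :
    S.encard ≤ (Nat.clog 2 d + 1 : ℕ) ∨ LeftCovered G (Nat.clog 2 d + 1) S := by
  have hle : S.encard ≤ (d + 1 : ℕ) := mod_cast encard_le_add_one_of_shattered hdeg hS
  lift S to Finset V using Set.finite_of_encard_le_coe hle
  rw [Set.encard_coe_eq_coe_finsetCard, Nat.cast_le] at hle ⊢
  refine or_iff_not_imp_left.2 fun hlt ↦ ?_
  have hclog : d ≤ 2 ^ Nat.clog 2 d := Nat.le_pow_clog one_lt_two d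
  have hlarge : 4 * d ≤ 2 ^ #S :=
    calc 4 * d ≤ 2 ^ (Nat.clog 2 d + 2) := by rw [pow_add]; omega
      _ ≤ 2 ^ #S := Nat.pow_le_pow_right two_pos (by omega)
  have hsmall : (S : Set V).ncard < 2 ^ (Nat.clog 2 d + 1) := by
    rw [Set.ncard_coe_finset, pow_succ]
    omega
  have hne : S.Nonempty := Finset.card_pos.1 (by omega)
  have : Nonempty V := hne.nonempty
  exact leftCovered_of_ncard_lt_two_pow hdeg hS hlarge subset_rfl hsmall

end OrderedGraph

/-- If `G` carries a linear order of left-degree at most `d ≥ 2` and `S` is a shattered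
set of size `t`, then with `p = ⌈log₂ d⌉ + 1` either `t ≤ p` or `S` is covered by the
left neighbourhoods of `p` vertices. -/
theorem shattered_small_or_leftCovered {V : Type*} [Fintype V] (G : SimpleGraph V)
    (d : ℕ) (hd : 2 ≤ d) (lo : LinearOrder V)
    (hdeg : ∀ v : V, {u : V | G.Adj u v ∧ lo.lt u v}.ncard ≤ d)
    (S : Set V) (hS : G.Shattered S) (t : ℕ) (ht : S.ncard = t) :
    t ≤ Nat.clog 2 d + 1 ∨
      ∃ w : Fin (Nat.clog 2 d + 1) → V,
        S ⊆ ⋃ i, {u : V | G.Adj u (w i) ∧ lo.lt u (w i)} := by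
  have hdeg' (v : V) : (leftNeighborSet G v).encard ≤ d := by
    rw [← (Set.toFinite _).cast_ncard_eq]
    exact Nat.cast_le.2 (hdeg v)
  rw [← ht, ← Nat.cast_le (α := ℕ∞), S.toFinite.cast_ncard_eq]
  exact shattered_small_or_leftCovered_general hd hdeg' hS
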